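/- For all integers j ≥ i ≥ k ≥ 0 and l ≥ 0, the quantum binomial identity [j+k choose i]·[i+l choose k] = Σ_{m=0}^{i} [l choose k−m]·[j+l+m choose m]·[j choose i−m] holds in the field ℚ(t) of rational functions. (This is the consistency identity, obtained from the top attachment s = i, that the coefficients a(i,m) = [l choose k−m] of the rectangular relations of the quantum sl(n) web space must satisfy.) -/

import Mathlib

/-- The quantum integer `[m] = (t^m - t^(-m))/(t - t⁻¹)` in the field `ℚ(t)`. -/
noncomputable def qint (m : ℤ) : RatFunc ℚ :=
  (RatFunc.X ^ m - RatFunc.X ^ (-m)) / (RatFunc.X - RatFunc.X⁻¹)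

/-- The quantum factorial `[m]! = [m][m-1]⋯[2][1]`, with `[0]! = 1`. -/
noncomputable def qfact (m : ℕ) : RatFunc ℚ :=
  ∏ i ∈ Finset.range m, qint (i + 1)

/-- The quantum binomial coefficient `[a choose b] = [a]!/([a-b]![b]!)` when `0 ≤ b ≤ a`,
and `0` when `b < 0` or `b > a`. -/
noncomputable def qbinom (a b : ℤ) : RatFunc ℚ :=
  if 0 ≤ b ∧ b ≤ a then qfact a.toNat / (qfact (a - b).toNat * qfact b.toNat) else 0

/-!
Both sides are symmetric under exchanging `(i, j)` with `(k, l)`, so one may assume `k ≤ i`. Then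
induct on `l`. For `l = 0` only `m = k` contributes, and the identity is trinomial revision. Passing
from `l` to `l + 1` multiplies the left side by `[i+l+1]/[i+l+1-k]`; the sum on the right obeys the
same recurrence, because the defect of its `m`-th term telescopes with certificate `[m][j-i+m]`.
-/

theorem qint_zero : qint 0 = 0 := by simp [qint]

theorem ratFunc_intDegree_X_zpow {K : Type*} [Field K] (n : ℤ) :
    ((RatFunc.X : RatFunc K) ^ n).intDegree = n := by
  have hnat (d : ℕ) : ((RatFunc.X : RatFunc K) ^ d).intDegree = d := by
    rw [← RatFunc.algebraMap_X, ← map_pow, RatFunc.intDegree_polynomial,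
      Polynomial.natDegree_X_pow]
  cases n with
  | ofNat d => rw [Int.ofNat_eq_natCast, zpow_natCast, hnat]
  | negSucc d => rw [zpow_negSucc, RatFunc.intDegree_inv, hnat, Int.negSucc_eq, Nat.cast_add_one]

theorem ratFunc_X_zpow_injective {K : Type*} [Field K] :
    Function.Injective fun n : ℤ => (RatFunc.X : RatFunc K) ^ n :=
  Function.LeftInverse.injective ratFunc_intDegree_X_zpow

theorem qint_ne_zero {n : ℤ} (hn : n ≠ 0) : qint n ≠ 0 := by
  have hsub {d : ℤ} (hd : d ≠ 0) : (RatFunc.X : RatFunc ℚ) ^ d - RatFunc.X ^ (-d) ≠ 0 :=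
    sub_ne_zero.2 (ratFunc_X_zpow_injective.ne (by lia))
  refine div_ne_zero (hsub hn) ?_
  simpa only [zpow_one, zpow_neg_one] using hsub one_ne_zero

theorem zpow_sub_zpow_neg_mul {K : Type*} [Field K] {x : K} (hx : x ≠ 0) (a b : ℤ) :
    (x ^ a - x ^ (-a)) * (x ^ b - x ^ (-b)) =
      x ^ (a + b) + x ^ (-(a + b)) - x ^ (a - b) - x ^ (-(a - b)) := by
  simp only [neg_add, sub_eq_add_neg, zpow_add₀ hx, neg_neg]
  ring

theorem qint_mul_qint (a b m : ℤ) :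
    qint a * qint b = qint (a + m) * qint (b - m) + qint m * qint (a - b + m) := by
  have hX : (RatFunc.X : RatFunc ℚ) ≠ 0 := RatFunc.X_ne_zero
  simp only [qint, div_mul_div_comm, ← add_div, zpow_sub_zpow_neg_mul hX]
  ring_nf

theorem qfact_ne_zero (n : ℕ) : qfact n ≠ 0 :=
  Finset.prod_ne_zero_iff.2 fun _ _ => qint_ne_zero (by positivity)

theorem qfact_succ (n : ℕ) : qfact (n + 1) = qfact n * qint (n + 1) :=
  Finset.prod_range_succ _ _

theorem qbinom_of_neg (a : ℤ) {b : ℤ} (hb : b < 0) : qbinom a b = 0 :=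
  if_neg (by lia)

theorem qbinom_of_lt {a b : ℤ} (hab : a < b) : qbinom a b = 0 :=
  if_neg (by lia)

theorem qbinom_natCast_add (c b : ℕ) :
    qbinom (c + b) b = qfact (c + b) / (qfact c * qfact b) := by
  have htoNat : ((c : ℤ) + b).toNat = c + b := by lia
  simp [qbinom, htoNat]

theorem qbinom_zero_zero : qbinom 0 0 = 1 := by simp [qbinom, qfact]

theorem qbinom_symm (a b : ℤ) : qbinom a (a - b) = qbinom a b := by
  simp only [qbinom, sub_sub_cancel, mul_comm (qfact b.toNat)]
  congr 1
  simp [and_comm]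

theorem qbinom_add_one_add_one_mul (a b : ℤ) :
    qbinom (a + 1) (b + 1) * qint (b + 1) = qint (a + 1) * qbinom a b := by
  rcases lt_or_ge b 0 with hb | hb
  · rw [qbinom_of_neg a hb]
    rcases (show b + 1 < 0 ∨ b + 1 = 0 by lia) with hb' | hb'
    · rw [qbinom_of_neg _ hb', zero_mul, mul_zero]
    · rw [hb', qint_zero, mul_zero, mul_zero]
  rcases lt_or_ge a b with hab | hab
  · rw [qbinom_of_lt hab, qbinom_of_lt (by lia), zero_mul, mul_zero]
  lift b to ℕ using hb
  obtain ⟨c, rfl⟩ : ∃ c : ℕ, a = c + b := ⟨(a - b).toNat, by lia⟩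
  have hc := qfact_ne_zero c
  have hb := qfact_ne_zero b
  have hb' : qint (b + 1) ≠ 0 := qint_ne_zero (by lia)
  have h := qbinom_natCast_add c (b + 1)
  rw [← add_assoc, qfact_succ, qfact_succ] at h
  push_cast at h
  rw [add_assoc, h, qbinom_natCast_add]
  field_simp
  rw [add_assoc]

theorem qbinom_add_one_mul (a b : ℤ) :
    qbinom (a + 1) b * qint (a + 1 - b) = qint (a + 1) * qbinom a b := by
  have h := qbinom_add_one_add_one_mul a (a - b)
  rwa [sub_add_eq_add_sub, qbinom_symm, qbinom_symm] at h

theorem qbinom_mul_qint_sub (a b : ℤ) :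
    qbinom a b * qint (a - b) = qbinom a (b + 1) * qint (b + 1) := by
  rcases eq_or_ne (a + 1) 0 with ha | ha
  · have hzero (c : ℤ) : qbinom a c = 0 := if_neg (by lia)
    rw [hzero, hzero, zero_mul, zero_mul]
  · apply mul_left_cancel₀ (qint_ne_zero ha)
    have hleft := qbinom_add_one_add_one_mul a b
    have hright := qbinom_add_one_mul a (b + 1)
    rw [add_sub_add_right_eq_sub] at hright
    linear_combination qint (b + 1) * hright - qint (a - b) * hleft

/- Subtracting `t^(-x)` times the `q`-Pascal rule with `t^(-b)` from `t^x` times the one with `t^b`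
eliminates the stray powers of `t`. -/
theorem qint_mul_qbinom_add_one {a : ℤ} (ha : a + 1 ≠ 0) (b x : ℤ) :
    qint x * qbinom (a + 1) b =
      qint (x + b) * qbinom a b + qint (x - (a + 1) + b) * qbinom a (b - 1) := by
  apply mul_left_cancel₀ (qint_ne_zero ha)
  have hupper := qbinom_add_one_mul a b
  have hboth := qbinom_add_one_add_one_mul a (b - 1)
  rw [sub_add_cancel] at hboth
  linear_combination qbinom (a + 1) b * qint_mul_qint x (a + 1) b + qint (x + b) * hupper +
    qint (x - (a + 1) + b) * hboth

theorem qbinom_mul_qbinom (a b c : ℤ) :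
    qbinom a b * qbinom b c = qbinom a c * qbinom (a - c) (b - c) := by
  rcases lt_or_ge c 0 with hc | hc
  · rw [qbinom_of_neg _ hc, qbinom_of_neg _ hc, mul_zero, zero_mul]
  rcases lt_or_ge b c with hbc | hbc
  · rw [qbinom_of_lt hbc, qbinom_of_neg _ (sub_neg.2 hbc), mul_zero, mul_zero]
  rcases lt_or_ge a b with hab | hab
  · rw [qbinom_of_lt hab, qbinom_of_lt (sub_lt_sub_right hab c), zero_mul, mul_zero]
  have hb := qfact_ne_zero b.toNat
  have hac := qfact_ne_zero (a - c).toNat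
  simp only [qbinom, show 0 ≤ b ∧ b ≤ a by lia, show 0 ≤ c ∧ c ≤ b by lia,
    show 0 ≤ c ∧ c ≤ a by lia, show 0 ≤ b - c ∧ b - c ≤ a - c by lia, and_self, if_true,
    sub_sub_sub_cancel_right]
  field_simp

/-- The `m`-th summand `[l choose k-m]·[j+l+m choose m]·[j choose i-m]` of the rectangular
consistency identity. -/
noncomputable def rectangularTerm (i j k l m : ℤ) : RatFunc ℚ :=
  qbinom l (k - m) * qbinom (j + l + m) m * qbinom j (i - m)

theorem rectangularTerm_swap (i j k l m : ℤ) :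
    rectangularTerm i j k l m = rectangularTerm k l i j m := by
  rw [rectangularTerm, rectangularTerm, add_comm j l]
  ring

theorem rectangularTerm_of_lt {i m : ℤ} (j k l : ℤ) (him : i < m) :
    rectangularTerm i j k l m = 0 := by
  rw [rectangularTerm, qbinom_of_neg j (sub_neg.2 him), mul_zero]

theorem rectangularTerm_telescope (i j k : ℤ) {l : ℤ} (hl : l + 1 ≠ 0) (m : ℤ) :
    qint (j + l + 1) * (qint (i + l + 1 - k) * rectangularTerm i j k (l + 1) m -
        qint (i + l + 1) * rectangularTerm i j k l m) =
      qint (m + 1) * qint (j - i + (m + 1)) * rectangularTerm i j k l (m + 1) -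
        qint m * qint (j - i + m) * rectangularTerm i j k l m := by
  have hl_shift : qint (i + l + 1 - k) * qbinom (l + 1) (k - m) =
      qint (i + l + 1 - m) * qbinom l (k - m) + qint (i - m) * qbinom l (k - (m + 1)) := by
    convert qint_mul_qbinom_add_one hl (k - m) (i + l + 1 - k) using 4 <;> ring
  have hjlm_shift : qbinom (j + (l + 1) + m) m * qint (j + l + 1) =
      qint (j + l + m + 1) * qbinom (j + l + m) m := by
    convert qbinom_add_one_mul (j + l + m) m using 3 <;> ring
  have hm_shift : qbinom (j + l + (m + 1)) (m + 1) * qint (m + 1) =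
      qint (j + l + m + 1) * qbinom (j + l + m) m := by
    rw [← qbinom_add_one_add_one_mul, add_assoc (j + l)]
  have hi_shift : qbinom j (i - (m + 1)) * qint (j - i + (m + 1)) =
      qbinom j (i - m) * qint (i - m) := by
    convert qbinom_mul_qint_sub j (i - (m + 1)) using 3 <;> ring
  have hqint : qint (j + l + 1) * qint (i + l + 1) =
      qint (j + l + m + 1) * qint (i + l + 1 - m) + qint m * qint (j - i + m) := by
    convert qint_mul_qint (j + l + 1) (i + l + 1) m using 4 <;> ring
  simp only [rectangularTerm]
  linear_combination
    qint (i + l + 1 - k) * qbinom (l + 1) (k - m) * qbinom j (i - m) * hjlm_shift +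
    qint (j + l + m + 1) * qbinom (j + l + m) m * qbinom j (i - m) * hl_shift -
    qbinom l (k - m) * qbinom (j + l + m) m * qbinom j (i - m) * hqint -
    qbinom l (k - (m + 1)) * qbinom j (i - (m + 1)) * qint (j - i + (m + 1)) * hm_shift -
    qbinom l (k - (m + 1)) * qint (j + l + m + 1) * qbinom (j + l + m) m * hi_shift

theorem sum_rectangularTerm_add_one (i : ℕ) {j l : ℤ} (k : ℤ) (hl : l + 1 ≠ 0)
    (hjl : j + l + 1 ≠ 0) :
    qint (i + l + 1 - k) * ∑ m ∈ Finset.range (i + 1), rectangularTerm i j k (l + 1) m =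
      qint (i + l + 1) * ∑ m ∈ Finset.range (i + 1), rectangularTerm i j k l m := by
  apply mul_left_cancel₀ (qint_ne_zero hjl)
  rw [← sub_eq_zero, ← mul_sub]
  have htel := Finset.sum_range_sub
    (fun m : ℕ => qint m * qint (j - i + m) * rectangularTerm i j k l m) (i + 1)
  rw [rectangularTerm_of_lt j k l (by lia), Nat.cast_zero, qint_zero] at htel
  simp only [Nat.cast_add_one, ← rectangularTerm_telescope (i : ℤ) j k hl] at htel
  simpa only [mul_zero, zero_mul, sub_zero, ← Finset.mul_sum, Finset.sum_sub_distrib] using htel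

theorem sum_rectangularTerm_zero (i k : ℕ) (j : ℤ) (hki : k ≤ i) :
    ∑ m ∈ Finset.range (i + 1), rectangularTerm i j k 0 m = qbinom (j + k) i * qbinom i k := by
  have hzero (m : ℕ) (hm : m ≠ k) : rectangularTerm i j k 0 m = 0 := by
    have h : qbinom 0 (k - m) = 0 := if_neg (by lia)
    rw [rectangularTerm, h, zero_mul, zero_mul]
  rw [Finset.sum_eq_single_of_mem k (Finset.mem_range.2 (by lia)) fun m _ => hzero m,
    rectangularTerm, sub_self, qbinom_zero_zero, one_mul, add_zero, qbinom_mul_qbinom,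
    add_sub_cancel_right]

theorem sum_rectangularTerm_of_le (i j k l : ℕ) (hki : k ≤ i) :
    ∑ m ∈ Finset.range (i + 1), rectangularTerm i j k l m =
      qbinom (j + k) i * qbinom (i + l) k := by
  induction l with
  | zero => rw [Nat.cast_zero, sum_rectangularTerm_zero i k j hki, add_zero]
  | succ l ih =>
    apply mul_left_cancel₀ (qint_ne_zero (n := i + l + 1 - k) (by lia))
    rw [Nat.cast_add_one, sum_rectangularTerm_add_one i k (by lia) (by lia), ih, ← add_assoc]
    linear_combination -qbinom (j + k) i * qbinom_add_one_mul (i + l) k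

theorem sum_rectangularTerm_swap {i k : ℕ} (j l : ℤ) (hik : i ≤ k) :
    ∑ m ∈ Finset.range (i + 1), rectangularTerm i j k l m =
      ∑ m ∈ Finset.range (k + 1), rectangularTerm k l i j m := by
  simp only [rectangularTerm_swap k l]
  exact (Finset.eventually_constant_sum
    (fun m hm => rectangularTerm_of_lt j k l (by lia)) (by lia)).symm

theorem rectangular_consistency_general (i j k l : ℕ) :
    qbinom (j + k) i * qbinom (i + l) k =
      ∑ m ∈ Finset.range (i + 1),
        qbinom l (k - m) * qbinom (j + l + m) m * qbinom j (i - m) := by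
  change _ = ∑ m ∈ Finset.range (i + 1), rectangularTerm i j k l m
  rcases le_total k i with hki | hik
  · exact (sum_rectangularTerm_of_le i j k l hki).symm
  · rw [sum_rectangularTerm_swap j l hik, sum_rectangularTerm_of_le k l i j hik, mul_comm,
      add_comm (l : ℤ), add_comm (k : ℤ)]

/-- For all integers `j ≥ i ≥ k ≥ 0` and `l ≥ 0`, the quantum binomial identity
`[j+k choose i]·[i+l choose k] = Σ_{m=0}^{i} [l choose k-m]·[j+l+m choose m]·[j choose i-m]`
holds in `ℚ(t)`. -/
theorem rectangular_consistency (i j k l : ℤ)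
    (hji : i ≤ j) (hik : k ≤ i) (hk : 0 ≤ k) (hl : 0 ≤ l) :
    qbinom (j + k) i * qbinom (i + l) k =
      ∑ m ∈ Finset.range (i.toNat + 1),
        qbinom l (k - (m : ℤ)) * qbinom (j + l + (m : ℤ)) (m : ℤ) * qbinom j (i - (m : ℤ)) := by
  obtain ⟨hi, hj⟩ : 0 ≤ i ∧ 0 ≤ j := by lia
  lift i to ℕ using hi; lift j to ℕ using hj; lift k to ℕ using hk; lift l to ℕ using hl
  exact rectangular_consistency_general i j k l
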